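/- Let γ[·] be a random specification on Ω = E^S such that 𝒢(γ[ξ]) ≠ ∅ for ℙ-almost every ξ, and let ξ ↦ μ[ξ] be a random infinite-volume Gibbs measure, i.e. an ℋ–e(𝒫(Ω))-measurable map H → 𝒫(Ω) with μ[ξ] ∈ 𝒢(γ[ξ]) for ℙ-almost every ξ. Then there exist a map w : H → 𝒫(𝒫(Ω)), ξ ↦ w[ξ], and a map π : H × Ω × ℱ → [0,1] such that A ↦ π[ξ](A|ω) is a probability measure on (Ω,ℱ) for every (ξ,ω) and (ξ,ω) ↦ π[ξ](A|ω) is (ℋ⊗ℱ)-measurable for every A ∈ ℱ, with the following properties: (0) w[ξ](M) = μ[ξ]({ω : π[ξ](·|ω) ∈ M}) for every ξ ∈ H and every M ∈ e(𝒫(Ω)); (1) ξ ↦ w[ξ] is ℋ–e(𝒫(𝒫(Ω)))-measurable; (2) for ℙ-almost every ξ, w[ξ]-almost every ν ∈ 𝒫(Ω) belongs to ex 𝒢(γ[ξ]) (i.e. the complement of ex 𝒢(γ[ξ]) is contained in a w[ξ]-null set in e(𝒫(Ω))); (3) for ℙ-almost every ξ, μ[ξ] is the barycenter of w[ξ], i.e.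 μ[ξ](A) = ∫ ν(A) w[ξ](dν) for every A ∈ ℱ. -/

import Mathlib

open MeasureTheory Filter Topology
open scoped ENNReal NNReal

namespace GibbsMeta

variable {S E H : Type*}

/-- The sub-σ-algebra `ℱ_Δ` of the product σ-algebra on `Ω = E^S` generated by the
coordinate projections with indices in `Δ ⊆ S`. -/
def cylSigma (S E : Type*) [MeasurableSpace E] (Δ : Set S) : MeasurableSpace (S → E) :=
  ⨆ i ∈ Δ, MeasurableSpace.comap (fun ω : S → E => ω i) inferInstance

/-- The tail σ-algebra `𝒯 = ⋂_{Λ finite} ℱ_{Λᶜ}`. -/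
def tailSigma (S E : Type*) [MeasurableSpace E] : MeasurableSpace (S → E) :=
  ⨅ Λ : Finset S, cylSigma S E ((↑Λ : Set S)ᶜ)

/-- A specification: a family of proper, consistent probability kernels indexed by
finite volumes, with `γ_Λ(A|·)` being `ℱ_{Λᶜ}`-measurable. -/
structure IsSpecification [MeasurableSpace E]
    (γ : Finset S → (S → E) → Measure (S → E)) : Prop where
  prob : ∀ (Λ : Finset S) (ω : S → E), IsProbabilityMeasure (γ Λ ω)
  meas : ∀ (Λ : Finset S) (A : Set (S → E)), MeasurableSet A →
    Measurable[cylSigma S E ((↑Λ : Set S)ᶜ)] fun ω => γ Λ ω A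
  proper : ∀ (Λ : Finset S) (A : Set (S → E)),
    MeasurableSet[cylSigma S E ((↑Λ : Set S)ᶜ)] A →
    ∀ ω, γ Λ ω A = A.indicator (fun _ => (1 : ℝ≥0∞)) ω
  consistent : ∀ (Δ Λ : Finset S), Δ ⊆ Λ → ∀ (A : Set (S → E)), MeasurableSet A →
    ∀ ω, ∫⁻ σ, γ Δ σ A ∂(γ Λ ω) = γ Λ ω A

/-- The set `𝒢(γ)` of (probability) Gibbs measures for the specification `γ`,
i.e. solutions of the DLR equations. -/
def Gibbs [MeasurableSpace E] (γ : Finset S → (S → E) → Measure (S → E)) :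
    Set (Measure (S → E)) :=
  {μ | IsProbabilityMeasure μ ∧
    ∀ (Λ : Finset S) (A : Set (S → E)), MeasurableSet A → ∫⁻ ω, γ Λ ω A ∂μ = μ A}

/-- The set `ex 𝒢(γ)` of extreme points of the convex set `𝒢(γ)`. -/
def exGibbs [MeasurableSpace E] (γ : Finset S → (S → E) → Measure (S → E)) :
    Set (Measure (S → E)) :=
  {μ | μ ∈ Gibbs γ ∧ ∀ ν₁ ∈ Gibbs γ, ∀ ν₂ ∈ Gibbs γ, ∀ t : ℝ≥0∞, 0 < t → t < 1 →
    μ = t • ν₁ + (1 - t) • ν₂ → ν₁ = μ ∧ ν₂ = μ}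

/-- A random specification: a measurable family of specifications. -/
structure IsRandomSpecification [MeasurableSpace E] [MeasurableSpace H]
    (γ : H → Finset S → (S → E) → Measure (S → E)) : Prop where
  spec : ∀ ξ, IsSpecification (γ ξ)
  jointMeas : ∀ (Λ : Finset S) (A : Set (S → E)), MeasurableSet A →
    Measurable fun p : H × (S → E) => γ p.1 Λ p.2 A

/-!
The idea is to detect extremality of a Gibbs measure through second moments. For a Gibbs measure `ν`
and an event `A`, let `T(ν, A) = inf_Λ ∫ γ_Λ(A|·)² dν`. By Jensen's inequality `T(ν, A) ≥ ν(A)²`,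
and `ν ↦ T(ν, A)` is concave, so strict convexity of the square shows: if `T(ν, A) = ν(A)²` for all
`A` in a countable generating π-system, then `ν` is extreme. This is a measurable condition on `ν`
with no reference to other Gibbs measures.

Take `π[ξ](·|ω)` to be the regular conditional law of the configuration under the joint law
`P(dξ, dω) = ℙ(dξ) μ[ξ](dω)`, given the σ-algebra `⋂_Λ ℋ ⊗ ℱ_{Λᶜ}`. It is almost surely Gibbs
because `γ[ξ]_Λ(A|ω)` is a conditional probability given the larger σ-algebra `ℋ ⊗ ℱ_{Λᶜ}`. Reverse
martingale convergence in `L²` gives `∫ T(π_x, A) P(dx) ≤ ∫ π_x(A)² P(dx)`, which turns Jensen's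
inequality into an equality almost surely.
-/

theorem tendsto_starProjection_iInf {𝕜 V ι : Type*} [RCLike 𝕜] [NormedAddCommGroup V]
    [InnerProductSpace 𝕜 V] [CompleteSpace V] [Preorder ι] {K : ι → Submodule 𝕜 V}
    [∀ i, (K i).HasOrthogonalProjection] [(⨅ i, K i).HasOrthogonalProjection]
    (hK : Antitone K) (x : V) :
    Tendsto (fun i => (K i).starProjection x) atTop (𝓝 ((⨅ i, K i).starProjection x)) := by
  have iInf_orthogonal : (⨅ i, K i)ᗮ = (⨆ i, (K i)ᗮ).topologicalClosure := by
    rw [← Submodule.orthogonal_orthogonal_eq_closure, ← Submodule.iInf_orthogonal]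
    simp only [Submodule.orthogonal_orthogonal]
  have tendsto_orthogonal := Submodule.starProjection_tendsto_closure_iSup (fun i => (K i)ᗮ)
    (fun _ _ hij => Submodule.orthogonal_le (hK hij)) x
  simp only [← iInf_orthogonal, Submodule.starProjection_orthogonal_val] at tendsto_orthogonal
  simpa only [sub_sub_cancel] using tendsto_orthogonal.const_sub x

section DecreasingSigmaAlgebras

variable {X ι : Type*} {mX : MeasurableSpace X} {P : Measure X}
  [Preorder ι] [IsDirectedOrder ι] [Nonempty ι] [Countable ι] {F : ι → MeasurableSpace X}

theorem aestronglyMeasurable_iInf_of_antitone (hF : Antitone F) {f : X → ℝ}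
    (hf : ∀ i, AEStronglyMeasurable[F i] f P) : AEStronglyMeasurable[⨅ i, F i] f P := by
  obtain ⟨i, i_mono, i_tendsto⟩ := exists_seq_monotone_tendsto_atTop_atTop ι
  let g n := (hf (i n)).mk f
  have limsup_measurable : Measurable[⨅ j, F j] fun x => limsup (fun n => g n x) atTop := by
    refine measurable_iff_comap_le.2 (le_iInf fun j => measurable_iff_comap_le.1 ?_)
    obtain ⟨N, hN⟩ := (i_tendsto.eventually_ge_atTop j).exists
    rw [show (fun x => limsup (fun n => g n x) atTop) = fun x => limsup (fun n => g (n + N) x) atTop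
      from funext fun x => (limsup_nat_add _ N).symm]
    exact Measurable.limsup fun n => ((hf (i (n + N))).stronglyMeasurable_mk.measurable).mono
      (hF (hN.trans (i_mono (Nat.le_add_left N n)))) le_rfl
  refine ⟨_, limsup_measurable.stronglyMeasurable, ?_⟩
  filter_upwards [ae_all_iff.2 fun n => (hf (i n)).ae_eq_mk] with x hx
  simp only [g, ← hx, limsup_const]

theorem iInf_lpMeas (hF : Antitone F) :
    ⨅ i, lpMeas ℝ ℝ (F i) 2 P = lpMeas ℝ ℝ (⨅ i, F i) 2 P := by
  ext f
  simp only [Submodule.mem_iInf, mem_lpMeas_iff_aestronglyMeasurable]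
  exact ⟨aestronglyMeasurable_iInf_of_antitone hF, fun hf i => hf.mono (iInf_le F i)⟩

theorem tendsto_condExpL2_iInf (hF : Antitone F) (hle : ∀ i, F i ≤ mX)
    (hinf : ⨅ i, F i ≤ mX) (f : Lp ℝ 2 P) :
    Tendsto (fun i => (condExpL2 ℝ ℝ (hle i) f : Lp ℝ 2 P)) atTop
      (𝓝 (condExpL2 ℝ ℝ hinf f : Lp ℝ 2 P)) := by
  have := fun i => Fact.mk (hle i)
  have := Fact.mk hinf
  have lpMeas_antitone : Antitone fun i => lpMeas ℝ ℝ (F i) 2 P := fun i j hij g hg =>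
    AEStronglyMeasurable.mono (hF hij) hg
  have : (⨅ i, lpMeas ℝ ℝ (F i) 2 P).HasOrthogonalProjection := by
    rw [iInf_lpMeas hF]; infer_instance
  have := tendsto_starProjection_iInf lpMeas_antitone f
  simp only [iInf_lpMeas hF] at this
  exact this

end DecreasingSigmaAlgebras

/-- `p` is a version of the conditional probability of `B` given the σ-algebra `m` under `P`. -/
structure IsCondProb {X : Type*} (m : MeasurableSpace X) {mX : MeasurableSpace X} (P : Measure X)
    (B : Set X) (p : X → ℝ≥0∞) : Prop where
  measurable : Measurable[m] p
  setLIntegral_eq : ∀ C, MeasurableSet[m] C → ∫⁻ x in C, p x ∂P = P (C ∩ B)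

namespace IsCondProb

variable {X : Type*} {m mX : MeasurableSpace X} {P : Measure X} [IsFiniteMeasure P]
  {B : Set X} {p : X → ℝ≥0∞}

theorem lintegral_ne_top (hp : IsCondProb m P B p) : ∫⁻ x, p x ∂P ≠ ∞ := by
  rw [← setLIntegral_univ, hp.setLIntegral_eq _ MeasurableSet.univ]
  exact measure_ne_top P _

theorem ae_lt_top (hp : IsCondProb m P B p) (hm : m ≤ mX) : ∀ᵐ x ∂P, p x < ∞ :=
  MeasureTheory.ae_lt_top (hp.measurable.mono hm le_rfl) hp.lintegral_ne_top

theorem toReal_ae_eq_condExp (hp : IsCondProb m P B p) (hm : m ≤ mX) (hB : MeasurableSet B) :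
    (fun x => (p x).toReal) =ᵐ[P] P[B.indicator fun _ => (1 : ℝ) | m] := by
  have p_measurable : Measurable p := hp.measurable.mono hm le_rfl
  refine ae_eq_condExp_of_forall_setIntegral_eq hm ((integrable_const 1).indicator hB)
    (fun C _ _ => (integrable_toReal_of_lintegral_ne_top p_measurable.aemeasurable
      hp.lintegral_ne_top).integrableOn) (fun C hC _ => ?_)
    hp.measurable.ennreal_toReal.stronglyMeasurable.aestronglyMeasurable
  rw [integral_toReal p_measurable.aemeasurable (ae_restrict_of_ae (hp.ae_lt_top hm)),
    hp.setLIntegral_eq C hC, integral_indicator hB, setIntegral_const, measureReal_def,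
    Measure.restrict_apply hB, Set.inter_comm]
  simp

theorem ae_eq {q : X → ℝ≥0∞} (hp : IsCondProb m P B p) (hq : IsCondProb m P B q) (hm : m ≤ mX)
    (hB : MeasurableSet B) : p =ᵐ[P] q := by
  filter_upwards [hp.toReal_ae_eq_condExp hm hB, hq.toReal_ae_eq_condExp hm hB, hp.ae_lt_top hm,
    hq.ae_lt_top hm] with x hpx hqx hpx_top hqx_top
  exact (ENNReal.toReal_eq_toReal_iff' hpx_top.ne hqx_top.ne).1 (hpx.trans hqx.symm)

theorem lintegral_sq (hp : IsCondProb m P B p) (hm : m ≤ mX) (hB : MeasurableSet B) :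
    ∫⁻ x, p x ^ 2 ∂P =
      ‖(condExpL2 ℝ ℝ hm (indicatorConstLp 2 hB (measure_ne_top P B) 1) : Lp ℝ 2 P)‖ₑ ^ 2 := by
  have ae_eq := (MemLp.condExpL2_ae_eq_condExp (𝕜 := ℝ) hm
    (memLp_indicator_const 2 hB (1 : ℝ) (Or.inr (measure_ne_top P B)))).trans
      (hp.toReal_ae_eq_condExp hm hB).symm
  have sq_enorm := eLpNorm_nnreal_pow_eq_lintegral (μ := P) (p := 2)
    (f := fun x => (p x).toReal) two_ne_zero
  simp only [NNReal.coe_ofNat, ENNReal.coe_ofNat, ENNReal.rpow_ofNat] at sq_enorm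
  rw [Lp.enorm_def, indicatorConstLp, eLpNorm_congr_ae ae_eq, sq_enorm]
  refine lintegral_congr_ae ((hp.ae_lt_top hm).mono fun x hx => ?_)
  simp only [Real.enorm_eq_ofReal ENNReal.toReal_nonneg, ENNReal.ofReal_toReal hx.ne]

variable {ι : Type*} [Preorder ι] [IsDirectedOrder ι] [Nonempty ι] [Countable ι]
  {F : ι → MeasurableSpace X} {q : X → ℝ≥0∞} {r : ι → X → ℝ≥0∞}

theorem iInf_lintegral_sq_le (hF : Antitone F) (hle : ∀ i, F i ≤ mX) (hB : MeasurableSet B)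
    (hr : ∀ i, IsCondProb (F i) P B (r i)) (hq : IsCondProb (⨅ i, F i) P B q) :
    ⨅ i, ∫⁻ x, r i x ^ 2 ∂P ≤ ∫⁻ x, q x ^ 2 ∂P := by
  have hinf : ⨅ i, F i ≤ mX := iInf_le_of_le (Classical.arbitrary ι) (hle _)
  simp only [hq.lintegral_sq hinf hB, fun i => (hr i).lintegral_sq (hle i) hB]
  exact ge_of_tendsto' (((ENNReal.continuous_pow 2).tendsto _).comp
    (tendsto_condExpL2_iInf hF hle hinf _).enorm) fun i => iInf_le _ i

end IsCondProb

section CondDistrib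

open ProbabilityTheory

variable {X Y Z : Type*} {m mX : MeasurableSpace X} [MeasurableSpace Y] [StandardBorelSpace Y]
  [Nonempty Y] {mZ : MeasurableSpace Z} {P : Measure X} [IsFiniteMeasure P] {f : X → Y} {g : X → Z}

theorem isCondProb_condDistrib (hf : AEMeasurable f P) (hg : Measurable g) {A : Set Y}
    (hA : MeasurableSet A) :
    IsCondProb (mZ.comap g) P (f ⁻¹' A) fun x => condDistrib f g P (g x) A :=
  ⟨measurable_condDistrib hA, fun _ => setLIntegral_condDistrib_of_measurableSet hg hf hA⟩

theorem lintegral_lintegral_condDistrib (hf : AEMeasurable f P) (hg : Measurable g)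
    {φ : Z × Y → ℝ≥0∞} (hφ : Measurable φ) :
    ∫⁻ x, ∫⁻ y, φ (g x, y) ∂condDistrib f g P (g x) ∂P = ∫⁻ x, φ (g x, f x) ∂P := by
  rw [← lintegral_map' hφ.aemeasurable (hg.aemeasurable.prodMk hf),
    ← compProd_map_condDistrib hf, Measure.lintegral_compProd hφ,
    lintegral_map hφ.lintegral_kernel_prod_right' hg]

theorem IsCondProb.lintegral_condDistrib {B : Set X} {φ : Z × Y → ℝ≥0∞}
    (hp : IsCondProb m P B fun x => φ (g x, f x)) (hm : mZ.comap g ≤ m)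
    (hf : AEMeasurable f P) (hg : Measurable g) (hφ : Measurable φ) :
    IsCondProb (mZ.comap g) P B fun x => ∫⁻ y, φ (g x, y) ∂condDistrib f g P (g x) where
  measurable := hφ.lintegral_kernel_prod_right'.comp (comap_measurable g)
  setLIntegral_eq := by
    rintro _ ⟨D, hD, rfl⟩
    rw [← hp.setLIntegral_eq _ (hm _ ⟨D, hD, rfl⟩), ← lintegral_indicator (hg hD),
      ← lintegral_indicator (hg hD)]
    refine Eq.trans (lintegral_congr fun x => ?_)
      (lintegral_lintegral_condDistrib hf hg (hφ.indicator (measurable_fst hD)))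
    by_cases hx : g x ∈ D <;> simp [hx]

end CondDistrib

section Kernels

open ProbabilityTheory

theorem measurable_map_prodMk {X Y Z : Type*} [MeasurableSpace X] [MeasurableSpace Y]
    [MeasurableSpace Z] (κ : Kernel X Y) [IsSFiniteKernel κ] {f : X × Y → Z} (hf : Measurable f) :
    Measurable fun x => (κ x).map fun y => f (x, y) := by
  have hf_section (x : X) : Measurable fun y => f (x, y) := hf.comp measurable_prodMk_left
  refine Measure.measurable_of_measurable_coe _ fun M hM => ?_
  simp only [Measure.map_apply (hf_section _) hM]
  exact Kernel.measurable_kernel_prodMk_left (hf hM)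

theorem ae_bind_eq_of_lintegral_compProd_eq {X Y : Type*} [MeasurableSpace X] [MeasurableSpace Y]
    [MeasurableSpace.CountableOrCountablyGenerated X Y] {ρ : Measure X} [IsFiniteMeasure ρ]
    {κ : Kernel X Y} [IsFiniteKernel κ] {π : Kernel (X × Y) Y} [IsFiniteKernel π]
    (h : ∀ φ : X × Y → ℝ≥0∞, Measurable φ →
      ∫⁻ x, ∫⁻ y, φ (x.1, y) ∂π x ∂(ρ ⊗ₘ κ) = ∫⁻ x, φ x ∂(ρ ⊗ₘ κ)) :
    ∀ᵐ x ∂ρ, (κ x).bind (fun y => π (x, y)) = κ x := by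
  have compProd_eq : ρ ⊗ₘ (κ ⊗ₖ π).snd = ρ ⊗ₘ κ := Measure.ext_of_lintegral _ fun φ hφ => by
    have hφ_fst : Measurable fun z : (X × Y) × Y => φ (z.1.1, z.2) := by fun_prop
    rw [← h φ hφ, Measure.lintegral_compProd hφ,
      Measure.lintegral_compProd hφ_fst.lintegral_kernel_prod_right']
    refine lintegral_congr fun x => ?_
    have hφ_section : Measurable fun y => φ (x, y) := hφ.comp measurable_prodMk_left
    rw [Kernel.snd_apply, lintegral_map hφ_section measurable_snd]
    exact Kernel.lintegral_compProd _ _ _ (hφ_section.comp measurable_snd)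
  filter_upwards [Kernel.ae_eq_of_compProd_eq compProd_eq] with x hx
  have π_section : Measurable fun y => π (x, y) := π.measurable.comp measurable_prodMk_left
  refine Measure.ext fun A hA => ?_
  calc (κ x).bind (fun y => π (x, y)) A
      = ∫⁻ y, π (x, y) A ∂κ x := Measure.bind_apply hA π_section.aemeasurable
    _ = (κ ⊗ₖ π).snd x A := by
        rw [Kernel.snd_apply' _ _ hA, Kernel.compProd_apply (measurable_snd hA)]
        rfl
    _ = κ x A := by rw [hx]

end Kernels


theorem sq_lintegral_le_lintegral_sq {X : Type*} {mX : MeasurableSpace X} (P : Measure X)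
    [IsProbabilityMeasure P] {f : X → ℝ≥0∞} (hf : AEMeasurable f P) :
    (∫⁻ x, f x ∂P) ^ 2 ≤ ∫⁻ x, f x ^ 2 ∂P := by
  have eLpNorm_sq_le : eLpNorm f 1 P ^ 2 ≤ eLpNorm f (2 : ℝ≥0) P ^ 2 :=
    pow_le_pow_left' (eLpNorm_le_eLpNorm_of_exponent_le (by norm_num) hf.aestronglyMeasurable) 2
  have eLpNorm_two_sq := eLpNorm_nnreal_pow_eq_lintegral (μ := P) (f := f) (p := 2) two_ne_zero
  simp only [NNReal.coe_ofNat, ENNReal.rpow_ofNat] at eLpNorm_two_sq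
  simpa only [eLpNorm_one_eq_lintegral_enorm, eLpNorm_two_sq, enorm_eq_self] using eLpNorm_sq_le

theorem eq_of_mul_sq_add_mul_sq_le {a b s t : ℝ≥0∞} (ha : a ≠ ∞) (hb : b ≠ ∞) (hs : s ≠ 0)
    (ht : t ≠ 0) (hst : s + t = 1) (h : s * a ^ 2 + t * b ^ 2 ≤ (s * a + t * b) ^ 2) : a = b := by
  lift a to ℝ≥0 using ha
  lift b to ℝ≥0 using hb
  lift s to ℝ≥0 using ne_top_of_le_ne_top ENNReal.one_ne_top (hst ▸ le_self_add)
  lift t to ℝ≥0 using ne_top_of_le_ne_top ENNReal.one_ne_top (hst ▸ le_add_self)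
  norm_cast at hs ht hst h
  have sq_sub_nonpos : (s * t * (a - b) ^ 2 : ℝ) ≤ 0 := by
    have h_real : (s * a ^ 2 + t * b ^ 2 : ℝ) ≤ (s * a + t * b) ^ 2 := mod_cast h
    have t_eq : (t : ℝ) = 1 - s := eq_sub_of_add_eq' (mod_cast hst)
    rw [t_eq] at h_real ⊢
    linarith
  have a_sub_b : (a - b : ℝ) = 0 := by
    by_contra hab
    exact sq_sub_nonpos.not_gt (by positivity)
  exact_mod_cast sub_eq_zero.1 a_sub_b

theorem exists_countable_isPiSystem_generateFrom (X : Type*) [mX : MeasurableSpace X]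
    [MeasurableSpace.CountablyGenerated X] :
    ∃ 𝒜 : Set (Set X), 𝒜.Countable ∧ IsPiSystem 𝒜 ∧ mX = MeasurableSpace.generateFrom 𝒜 := by
  obtain ⟨𝒮, h𝒮_countable, h𝒮_gen⟩ :=
    MeasurableSpace.CountablyGenerated.isCountablyGenerated (α := X)
  refine ⟨generateSetAlgebra 𝒮, countable_generateSetAlgebra h𝒮_countable,
    isSetAlgebra_generateSetAlgebra.isSetRing.isSetSemiring.isPiSystem, ?_⟩
  rw [generateFrom_generateSetAlgebra_eq, h𝒮_gen]

section CylinderSigmaAlgebra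

variable [MeasurableSpace E] [mH : MeasurableSpace H] {Δ Δ' : Set S}

theorem measurable_eval_cylSigma {i : S} (hi : i ∈ Δ) :
    Measurable[cylSigma S E Δ] fun ω : S → E => ω i :=
  measurable_iff_comap_le.2 (le_iSup₂_of_le i hi le_rfl)

theorem cylSigma_mono (h : Δ ⊆ Δ') : cylSigma S E Δ ≤ cylSigma S E Δ' :=
  biSup_mono h

theorem cylSigma_le_pi : cylSigma S E Δ ≤ MeasurableSpace.pi :=
  iSup₂_le fun i _ => measurable_iff_comap_le.1 (measurable_pi_apply i)

theorem cylSigma_le_comap_domRestrict : cylSigma S E Δ ≤ MeasurableSpace.pi.comap Δ.domRestrict :=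
  iSup₂_le fun i hi => measurable_iff_comap_le.1
    ((measurable_pi_apply (⟨i, hi⟩ : Δ)).comp (comap_measurable Δ.domRestrict))

theorem eq_of_eqOn_of_measurable_cylSigma {f : (S → E) → ℝ≥0∞}
    (hf : Measurable[cylSigma S E Δ] f) {ω ω' : S → E} (h : Set.EqOn ω ω' Δ) : f ω = f ω' :=
  (hf.mono cylSigma_le_comap_domRestrict le_rfl).factorsThrough
    (Set.domRestrict_eq_domRestrict_iff.2 h)

theorem measurable_piecewise_cylSigma [DecidablePred (· ∈ Δ)] (o : S → E) :
    Measurable[cylSigma S E Δ] fun ω => Δ.piecewise ω o := by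
  refine @measurable_pi_lambda _ _ _ (cylSigma S E Δ) _ _ fun i => ?_
  by_cases hi : i ∈ Δ
  · simpa only [Set.piecewise_eq_of_mem _ _ _ hi] using measurable_eval_cylSigma hi
  · simpa only [Set.piecewise_eq_of_notMem _ _ _ hi] using measurable_const

theorem measurable_prod_cylSigma_of_sections {f : H × (S → E) → ℝ≥0∞} (hf : Measurable f)
    (hsection : ∀ ξ, Measurable[cylSigma S E Δ] fun ω => f (ξ, ω)) :
    Measurable[mH.prod (cylSigma S E Δ)] f := by
  classical
  cases isEmpty_or_nonempty (S → E) with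
  | inl _ => exact @measurable_of_empty _ _ (_) _ _ f
  | inr hne =>
    obtain ⟨o⟩ := hne
    -- Freezing the coordinates outside `Δ` does not change `f`.
    have f_eq : f = f ∘ fun x => (x.1, Δ.piecewise x.2 o) := funext fun x =>
      eq_of_eqOn_of_measurable_cylSigma (hsection x.1) (Set.piecewise_eqOn Δ x.2 o).symm
    rw [f_eq]
    refine hf.comp ?_
    exact Measurable.prodMk measurable_fst ((measurable_piecewise_cylSigma o).comp measurable_snd)

end CylinderSigmaAlgebra

/-- The part of `IsSpecification` that does not relate different volumes: every `γ_Λ` is a proper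
kernel from `ℱ_{Λᶜ}` to `ℱ`. Properness on the whole space makes each `γ_Λ(·|ω)` a probability
measure. -/
structure IsProperKernelFamily [MeasurableSpace E]
    (γ : Finset S → (S → E) → Measure (S → E)) : Prop where
  meas : ∀ (Λ : Finset S) (A : Set (S → E)), MeasurableSet A →
    Measurable[cylSigma S E ((↑Λ : Set S)ᶜ)] fun ω => γ Λ ω A
  proper : ∀ (Λ : Finset S) (A : Set (S → E)),
    MeasurableSet[cylSigma S E ((↑Λ : Set S)ᶜ)] A →
    ∀ ω, γ Λ ω A = A.indicator (fun _ => (1 : ℝ≥0∞)) ω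

/-- For a Gibbs measure `ν`, the second moment of the tail-conditional probability `ν(A|𝒯)`:
the second moments of `ν(A|ℱ_{Λᶜ}) = γ_Λ(A|·)` decrease to it. -/
noncomputable def tailSecondMoment [MeasurableSpace E] (γ : Finset S → (S → E) → Measure (S → E))
    (ν : Measure (S → E)) (A : Set (S → E)) : ℝ≥0∞ :=
  ⨅ Λ, ∫⁻ ω, γ Λ ω A ^ 2 ∂ν

/-- The Gibbs measures `ν` under which `ν(A|𝒯)` has variance zero for every `A ∈ 𝒜`. The DLR
equations are required on `𝒜` only, so that this set is measurable for countable `𝒜`. -/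
def tailDegenerateGibbs [MeasurableSpace E] (𝒜 : Set (Set (S → E)))
    (γ : Finset S → (S → E) → Measure (S → E)) : Set (Measure (S → E)) :=
  {ν | ν Set.univ = 1 ∧ (∀ Λ, ∀ A ∈ 𝒜, ∫⁻ ω, γ Λ ω A ∂ν = ν A) ∧
    ∀ A ∈ 𝒜, tailSecondMoment γ ν A ≤ ν A ^ 2}

section Gibbs

variable [MeasurableSpace E] {γ : Finset S → (S → E) → Measure (S → E)} {ν : Measure (S → E)}
  {Λ : Finset S} {A B : Set (S → E)}

theorem IsSpecification.isProperKernelFamily (hγ : IsSpecification γ) : IsProperKernelFamily γ :=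
  ⟨hγ.meas, hγ.proper⟩

namespace IsProperKernelFamily

theorem measurable_apply (hγ : IsProperKernelFamily γ) (Λ : Finset S) (hA : MeasurableSet A) :
    Measurable fun ω => γ Λ ω A :=
  (hγ.meas Λ A hA).mono cylSigma_le_pi le_rfl

theorem measurable (hγ : IsProperKernelFamily γ) (Λ : Finset S) : Measurable (γ Λ) :=
  Measure.measurable_of_measurable_coe _ fun _ => hγ.measurable_apply Λ

theorem apply_univ (hγ : IsProperKernelFamily γ) (Λ : Finset S) (ω : S → E) :
    γ Λ ω Set.univ = 1 := by
  rw [hγ.proper Λ _ MeasurableSet.univ ω, Set.indicator_univ]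

theorem apply_inter (hγ : IsProperKernelFamily γ)
    (hB : MeasurableSet[cylSigma S E ((↑Λ : Set S)ᶜ)] B) (ω : S → E) :
    γ Λ ω (B ∩ A) = B.indicator (fun ω => γ Λ ω A) ω := by
  by_cases hω : ω ∈ B
  · have compl_null : γ Λ ω Bᶜ = 0 := by simp [hγ.proper Λ _ hB.compl, hω]
    rw [Set.indicator_of_mem hω, Set.inter_comm, measure_inter_conull compl_null]
  · have B_null : γ Λ ω B = 0 := by simp [hγ.proper Λ _ hB, hω]
    rw [Set.indicator_of_notMem hω, measure_inter_null_of_null_left A B_null]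

theorem setLIntegral_eq (hγ : IsProperKernelFamily γ) (hν : ν ∈ Gibbs γ) (hA : MeasurableSet A)
    (hB : MeasurableSet[cylSigma S E ((↑Λ : Set S)ᶜ)] B) :
    ∫⁻ ω in B, γ Λ ω A ∂ν = ν (B ∩ A) := by
  have hB' : MeasurableSet B := cylSigma_le_pi _ hB
  rw [← lintegral_indicator hB', ← hν.2 Λ _ (hB'.inter hA)]
  exact lintegral_congr fun ω => (hγ.apply_inter hB ω).symm

theorem sq_measure_le_tailSecondMoment (hγ : IsProperKernelFamily γ) (hν : ν ∈ Gibbs γ)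
    (hA : MeasurableSet A) : ν A ^ 2 ≤ tailSecondMoment γ ν A := by
  have := hν.1
  refine le_iInf fun Λ => ?_
  rw [← hν.2 Λ A hA]
  exact sq_lintegral_le_lintegral_sq ν (hγ.measurable_apply Λ hA).aemeasurable

theorem measurable_tailSecondMoment [Countable S] (hγ : IsProperKernelFamily γ)
    (hA : MeasurableSet A) : Measurable fun ν => tailSecondMoment γ ν A :=
  Measurable.iInf fun Λ => Measure.measurable_lintegral ((hγ.measurable_apply Λ hA).pow_const 2)

theorem mem_Gibbs_of_generateFrom (hγ : IsProperKernelFamily γ) {𝒜 : Set (Set (S → E))}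
    (hpi : IsPiSystem 𝒜) (hgen : MeasurableSpace.pi = MeasurableSpace.generateFrom 𝒜)
    [IsProbabilityMeasure ν] (hν : ∀ Λ, ∀ A ∈ 𝒜, ∫⁻ ω, γ Λ ω A ∂ν = ν A) : ν ∈ Gibbs γ := by
  have bind_apply (Λ : Finset S) {A : Set (S → E)} (hA : MeasurableSet A) :
      ν.bind (γ Λ) A = ∫⁻ ω, γ Λ ω A ∂ν :=
    Measure.bind_apply hA (hγ.measurable Λ).aemeasurable
  have bind_eq (Λ : Finset S) : ν = ν.bind (γ Λ) := by
    refine ext_of_generate_finite 𝒜 hgen hpi (fun A hA => ?_) ?_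
    · rw [bind_apply Λ (hgen ▸ MeasurableSpace.measurableSet_generateFrom hA), hν Λ A hA]
    · simp only [bind_apply Λ MeasurableSet.univ, hγ.apply_univ, lintegral_one]
  exact ⟨‹_›, fun Λ A hA => by rw [← bind_apply Λ hA, ← bind_eq Λ]⟩

theorem measurableSet_tailDegenerateGibbs [Countable S] (hγ : IsProperKernelFamily γ)
    {𝒜 : Set (Set (S → E))} (hcount : 𝒜.Countable) (h𝒜 : ∀ A ∈ 𝒜, MeasurableSet A) :
    MeasurableSet (tailDegenerateGibbs 𝒜 γ) := by
  have measurable_eval {A : Set (S → E)} (hA : MeasurableSet A) :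
      Measurable fun ν : Measure (S → E) => ν A := Measure.measurable_coe hA
  simp only [tailDegenerateGibbs, Set.ofPred_and, Set.ofPred_forall]
  refine .inter (measurableSet_eq_fun (measurable_eval .univ) measurable_const) (.inter ?_ ?_)
  · exact .iInter fun Λ => .biInter hcount fun A hA => measurableSet_eq_fun
      (Measure.measurable_lintegral (hγ.measurable_apply Λ (h𝒜 A hA))) (measurable_eval (h𝒜 A hA))
  · exact .biInter hcount fun A hA => measurableSet_le
      (hγ.measurable_tailSecondMoment (h𝒜 A hA)) ((measurable_eval (h𝒜 A hA)).pow_const 2)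

end IsProperKernelFamily

theorem mul_tailSecondMoment_add_le (γ : Finset S → (S → E) → Measure (S → E))
    (ν₁ ν₂ : Measure (S → E)) (s t : ℝ≥0∞) (A : Set (S → E)) :
    s * tailSecondMoment γ ν₁ A + t * tailSecondMoment γ ν₂ A ≤
      tailSecondMoment γ (s • ν₁ + t • ν₂) A := by
  refine le_iInf fun Λ => ?_
  rw [lintegral_add_measure, lintegral_smul_measure, lintegral_smul_measure]
  exact add_le_add (mul_le_mul_right (iInf_le _ Λ) s) (mul_le_mul_right (iInf_le _ Λ) t)

theorem IsProperKernelFamily.measure_eq_of_tailSecondMoment_le (hγ : IsProperKernelFamily γ)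
    {ν₁ ν₂ : Measure (S → E)} (h₁ : ν₁ ∈ Gibbs γ) (h₂ : ν₂ ∈ Gibbs γ) {s t : ℝ≥0∞} (hs : s ≠ 0)
    (ht : t ≠ 0) (hst : s + t = 1) (hA : MeasurableSet A)
    (h : tailSecondMoment γ (s • ν₁ + t • ν₂) A ≤ (s • ν₁ + t • ν₂) A ^ 2) : ν₁ A = ν₂ A := by
  have := h₁.1
  have := h₂.1
  refine eq_of_mul_sq_add_mul_sq_le (measure_ne_top ν₁ A) (measure_ne_top ν₂ A) hs ht hst ?_
  calc s * ν₁ A ^ 2 + t * ν₂ A ^ 2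
      ≤ s * tailSecondMoment γ ν₁ A + t * tailSecondMoment γ ν₂ A := by
        gcongr
        exacts [hγ.sq_measure_le_tailSecondMoment h₁ hA, hγ.sq_measure_le_tailSecondMoment h₂ hA]
    _ ≤ tailSecondMoment γ (s • ν₁ + t • ν₂) A := mul_tailSecondMoment_add_le γ ν₁ ν₂ s t A
    _ ≤ (s * ν₁ A + t * ν₂ A) ^ 2 := h

theorem IsProperKernelFamily.tailDegenerateGibbs_subset_exGibbs (hγ : IsProperKernelFamily γ)
    {𝒜 : Set (Set (S → E))} (hpi : IsPiSystem 𝒜)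
    (hgen : MeasurableSpace.pi = MeasurableSpace.generateFrom 𝒜) :
    tailDegenerateGibbs 𝒜 γ ⊆ exGibbs γ := by
  rintro ν ⟨hν_univ, hν_dlr, hν_deg⟩
  have : IsProbabilityMeasure ν := ⟨hν_univ⟩
  refine ⟨hγ.mem_Gibbs_of_generateFrom hpi hgen hν_dlr, ?_⟩
  rintro ν₁ h₁ ν₂ h₂ t ht_pos ht_lt rfl
  have := h₁.1
  have := h₂.1
  have hsum : t + (1 - t) = 1 := add_tsub_cancel_of_le ht_lt.le
  obtain rfl : ν₁ = ν₂ := ext_of_generate_finite 𝒜 hgen hpi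
    (fun A hA => hγ.measure_eq_of_tailSecondMoment_le h₁ h₂ ht_pos.ne' (tsub_pos_of_lt ht_lt).ne'
      hsum (hgen ▸ MeasurableSpace.measurableSet_generateFrom hA) (hν_deg A hA))
    (by simp only [measure_univ])
  rw [← add_smul, hsum, one_smul]
  exact ⟨rfl, rfl⟩

end Gibbs

/-- A measurable family of proper kernel families: `IsRandomSpecification` without consistency. -/
structure IsRandomProperKernelFamily [MeasurableSpace E] [MeasurableSpace H]
    (γ : H → Finset S → (S → E) → Measure (S → E)) : Prop where
  proper : ∀ ξ, IsProperKernelFamily (γ ξ)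
  jointMeas : ∀ (Λ : Finset S) (A : Set (S → E)), MeasurableSet A →
    Measurable fun p : H × (S → E) => γ p.1 Λ p.2 A

theorem IsRandomSpecification.isRandomProperKernelFamily [MeasurableSpace E] [MeasurableSpace H]
    {γ : H → Finset S → (S → E) → Measure (S → E)} (hγ : IsRandomSpecification γ) :
    IsRandomProperKernelFamily γ :=
  ⟨fun ξ => (hγ.spec ξ).isProperKernelFamily, hγ.jointMeas⟩

section RandomTail

open ProbabilityTheory

variable [MeasurableSpace E] [MeasurableSpace H]

/-- The events depending on the disorder and on the configuration outside `Λ`. -/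
abbrev disorderCylSigma (S E H : Type*) [MeasurableSpace E] [mH : MeasurableSpace H]
    (Λ : Finset S) : MeasurableSpace (H × (S → E)) :=
  mH.prod (cylSigma S E ((↑Λ : Set S)ᶜ))

/-- The random tail σ-algebra `⋂_Λ ℋ ⊗ ℱ_{Λᶜ}`. -/
abbrev disorderTailSigma (S E H : Type*) [MeasurableSpace E] [MeasurableSpace H] :
    MeasurableSpace (H × (S → E)) :=
  ⨅ Λ : Finset S, disorderCylSigma S E H Λ

theorem disorderCylSigma_le (Λ : Finset S) :
    disorderCylSigma S E H Λ ≤ Prod.instMeasurableSpace :=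
  sup_le_sup le_rfl (MeasurableSpace.comap_mono cylSigma_le_pi)

theorem disorderCylSigma_antitone : Antitone (disorderCylSigma S E H) := fun _ _ h =>
  sup_le_sup le_rfl (MeasurableSpace.comap_mono
    (cylSigma_mono (Set.compl_subset_compl.2 (Finset.coe_subset.2 h))))

theorem disorderTailSigma_le : disorderTailSigma S E H ≤ Prod.instMeasurableSpace :=
  iInf_le_of_le ∅ (disorderCylSigma_le ∅)

theorem measurable_fst_disorderTailSigma :
    Measurable[disorderTailSigma S E H] (Prod.fst : H × (S → E) → H) :=
  measurable_iff_comap_le.2 (le_iInf fun _ => le_sup_left)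

/-- `P` is a joint law of disorder and configuration under which `γ[ξ]_Λ(·|ω)` is the conditional
law of the configuration given the disorder and the configuration outside `Λ`. -/
def IsJointlyGibbs (γ : H → Finset S → (S → E) → Measure (S → E))
    (P : Measure (H × (S → E))) : Prop :=
  ∀ (Λ : Finset S) (A : Set (S → E)), MeasurableSet A →
    IsCondProb (disorderCylSigma S E H Λ) P (Prod.snd ⁻¹' A) fun x => γ x.1 Λ x.2 A

variable {γ : H → Finset S → (S → E) → Measure (S → E)}

theorem isJointlyGibbs_compProd (hγ : IsRandomProperKernelFamily γ)
    {ρ : Measure H} [SFinite ρ] {κ : Kernel H (S → E)} [IsSFiniteKernel κ]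
    (hκ : ∀ᵐ ξ ∂ρ, κ ξ ∈ Gibbs (γ ξ)) : IsJointlyGibbs γ (ρ ⊗ₘ κ) := by
  intro Λ A hA
  refine ⟨measurable_prod_cylSigma_of_sections (hγ.jointMeas Λ A hA)
    fun ξ => (hγ.proper ξ).meas Λ A hA, fun C hC => ?_⟩
  have hC' : MeasurableSet C := disorderCylSigma_le Λ _ hC
  rw [← lintegral_indicator hC', Measure.lintegral_compProd ((hγ.jointMeas Λ A hA).indicator hC'),
    Measure.compProd_apply (hC'.inter (measurable_snd hA))]
  refine lintegral_congr_ae (hκ.mono fun ξ hξ => ?_)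
  have hsection : MeasurableSet[cylSigma S E ((↑Λ : Set S)ᶜ)] (Prod.mk ξ ⁻¹' C) :=
    measurable_prodMk_left hC
  have dlr := (hγ.proper ξ).setLIntegral_eq hξ hA hsection
  rw [← lintegral_indicator (measurable_prodMk_left hC')] at dlr
  exact dlr

variable [Countable S] [StandardBorelSpace E] [Nonempty (S → E)]
  {P : Measure (H × (S → E))} [IsFiniteMeasure P]

/-- The regular conditional law, under `P`, of the configuration given the random tail
σ-algebra. -/
noncomputable def tailKernel (P : Measure (H × (S → E))) [IsFiniteMeasure P] :
    Kernel[disorderTailSigma S E H] (H × (S → E)) (S → E) :=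
  @condDistrib _ _ _ _ _ _ _ (disorderTailSigma S E H) Prod.snd id P _

instance (P : Measure (H × (S → E))) [IsFiniteMeasure P] : IsMarkovKernel (tailKernel P) := by
  unfold tailKernel; infer_instance

theorem measurable_tailKernel (P : Measure (H × (S → E))) [IsFiniteMeasure P] :
    Measurable (tailKernel P) :=
  (tailKernel P).measurable.mono disorderTailSigma_le le_rfl

theorem isCondProb_tailKernel {A : Set (S → E)} (hA : MeasurableSet A) :
    IsCondProb (disorderTailSigma S E H) P (Prod.snd ⁻¹' A) fun x => tailKernel P x A := by
  have := isCondProb_condDistrib (mZ := disorderTailSigma S E H) (P := P) (g := id)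
    measurable_snd.aemeasurable (measurable_id'' disorderTailSigma_le) hA
  rwa [MeasurableSpace.comap_id] at this

theorem lintegral_lintegral_tailKernel {φ : H × (S → E) → ℝ≥0∞} (hφ : Measurable φ) :
    ∫⁻ x, ∫⁻ σ, φ (x.1, σ) ∂tailKernel P x ∂P = ∫⁻ x, φ x ∂P :=
  lintegral_lintegral_condDistrib (mZ := disorderTailSigma S E H) (g := id)
    measurable_snd.aemeasurable (measurable_id'' disorderTailSigma_le)
    (hφ.comp (Measurable.prodMk (measurable_fst_disorderTailSigma.comp measurable_fst)
      measurable_snd))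

theorem IsJointlyGibbs.ae_lintegral_tailKernel_eq (hP : IsJointlyGibbs γ P)
    (hγ : IsRandomProperKernelFamily γ)
    (Λ : Finset S) {A : Set (S → E)} (hA : MeasurableSet A) :
    ∀ᵐ x ∂P, ∫⁻ σ, γ x.1 Λ σ A ∂tailKernel P x = tailKernel P x A := by
  have averaged := (hP Λ A hA).lintegral_condDistrib (mZ := disorderTailSigma S E H) (g := id)
    (φ := fun z => γ z.1.1 Λ z.2 A)
    (by rw [MeasurableSpace.comap_id]; exact iInf_le _ Λ)
    measurable_snd.aemeasurable (measurable_id'' disorderTailSigma_le)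
    ((hγ.jointMeas Λ A hA).comp (Measurable.prodMk
      (measurable_fst_disorderTailSigma.comp measurable_fst) measurable_snd))
  rw [MeasurableSpace.comap_id] at averaged
  exact averaged.ae_eq (isCondProb_tailKernel hA) disorderTailSigma_le (measurable_snd hA)

theorem IsJointlyGibbs.lintegral_tailSecondMoment_tailKernel_le (hP : IsJointlyGibbs γ P)
    (hγ : IsRandomProperKernelFamily γ)
    {A : Set (S → E)} (hA : MeasurableSet A) :
    ∫⁻ x, tailSecondMoment (γ x.1) (tailKernel P x) A ∂P ≤ ∫⁻ x, tailKernel P x A ^ 2 ∂P :=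
  calc ∫⁻ x, tailSecondMoment (γ x.1) (tailKernel P x) A ∂P
      ≤ ⨅ Λ, ∫⁻ x, ∫⁻ σ, γ x.1 Λ σ A ^ 2 ∂tailKernel P x ∂P :=
        le_iInf fun Λ => lintegral_mono fun _ => iInf_le _ Λ
    _ = ⨅ Λ, ∫⁻ x, γ x.1 Λ x.2 A ^ 2 ∂P :=
        iInf_congr fun Λ => lintegral_lintegral_tailKernel ((hγ.jointMeas Λ A hA).pow_const 2)
    _ ≤ ∫⁻ x, tailKernel P x A ^ 2 ∂P :=
        IsCondProb.iInf_lintegral_sq_le disorderCylSigma_antitone disorderCylSigma_le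
          (measurable_snd hA) (fun Λ => hP Λ A hA) (isCondProb_tailKernel hA)

theorem IsRandomProperKernelFamily.measurable_tailSecondMoment_tailKernel
    (hγ : IsRandomProperKernelFamily γ) {A : Set (S → E)} (hA : MeasurableSet A) :
    Measurable fun x => tailSecondMoment (γ x.1) (tailKernel P x) A := by
  refine .iInf fun Λ => Measurable.mono (Measurable.lintegral_kernel_prod_right'
    (κ := tailKernel P) (f := fun z => γ z.1.1 Λ z.2 A ^ 2) ?_) disorderTailSigma_le le_rfl
  exact ((hγ.jointMeas Λ A hA).comp (Measurable.prodMk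
      (measurable_fst_disorderTailSigma.comp measurable_fst) measurable_snd)).pow_const 2

theorem IsJointlyGibbs.ae_tailKernel_mem_tailDegenerateGibbs (hP : IsJointlyGibbs γ P)
    (hγ : IsRandomProperKernelFamily γ) {𝒜 : Set (Set (S → E))} (hcount : 𝒜.Countable)
    (hpi : IsPiSystem 𝒜) (hgen : MeasurableSpace.pi = MeasurableSpace.generateFrom 𝒜) :
    ∀ᵐ x ∂P, tailKernel P x ∈ tailDegenerateGibbs 𝒜 (γ x.1) := by
  have h𝒜 : ∀ A ∈ 𝒜, MeasurableSet A := fun A hA =>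
    hgen ▸ MeasurableSpace.measurableSet_generateFrom hA
  have ae_dlr : ∀ᵐ x ∂P, ∀ Λ, ∀ A ∈ 𝒜, ∫⁻ σ, γ x.1 Λ σ A ∂tailKernel P x = tailKernel P x A :=
    ae_all_iff.2 fun Λ => (ae_ball_iff hcount).2 fun A hA =>
      hP.ae_lintegral_tailKernel_eq hγ Λ (h𝒜 A hA)
  have ae_sq_eq : ∀ᵐ x ∂P, ∀ A ∈ 𝒜,
      tailKernel P x A ^ 2 = tailSecondMoment (γ x.1) (tailKernel P x) A := by
    refine (ae_ball_iff hcount).2 fun A hA => ae_eq_of_ae_le_of_lintegral_le ?_ ?_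
      (hγ.measurable_tailSecondMoment_tailKernel (h𝒜 A hA)).aemeasurable
      (hP.lintegral_tailSecondMoment_tailKernel_le hγ (h𝒜 A hA))
    · filter_upwards [ae_dlr] with x hx
      exact (hγ.proper x.1).sq_measure_le_tailSecondMoment
        ((hγ.proper x.1).mem_Gibbs_of_generateFrom hpi hgen hx) (h𝒜 A hA)
    · refine ((lintegral_mono fun x => pow_le_one' prob_le_one 2).trans_lt ?_).ne
      simpa only [lintegral_one] using measure_lt_top P _
  filter_upwards [ae_dlr, ae_sq_eq] with x hx_dlr hx_sq
  exact ⟨measure_univ, hx_dlr, fun A hA => (hx_sq A hA).ge⟩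

theorem ae_bind_tailKernel_eq (ρ : Measure H) [IsFiniteMeasure ρ] (κ : Kernel H (S → E))
    [IsFiniteKernel κ] :
    ∀ᵐ ξ ∂ρ, (κ ξ).bind (fun ω => tailKernel (ρ ⊗ₘ κ) (ξ, ω)) = κ ξ := by
  let π : Kernel (H × (S → E)) (S → E) := ⟨tailKernel (ρ ⊗ₘ κ), measurable_tailKernel _⟩
  have : IsMarkovKernel π :=
    ⟨fun x => inferInstanceAs (IsProbabilityMeasure (tailKernel (ρ ⊗ₘ κ) x))⟩
  exact ae_bind_eq_of_lintegral_compProd_eq (π := π) fun _ => lintegral_lintegral_tailKernel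

end RandomTail

open ProbabilityTheory in
theorem extremal_decomposition_of_random_Gibbs_measure_general
    [Countable S] [MeasurableSpace E] [StandardBorelSpace E] [MeasurableSpace H]
    (Q : Measure H) [SFinite Q]
    (γ : H → Finset S → (S → E) → Measure (S → E))
    (hγ : IsRandomProperKernelFamily γ)
    (μ : H → Measure (S → E))
    (hμmeas : Measurable μ)
    (hμprob : ∀ ξ, IsProbabilityMeasure (μ ξ))
    (hμGibbs : ∀ᵐ ξ ∂Q, μ ξ ∈ Gibbs (γ ξ)) :
    ∃ (w : H → Measure (Measure (S → E))) (π : H → (S → E) → Measure (S → E)),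
      (∀ ξ ω, IsProbabilityMeasure (π ξ ω)) ∧
      (∀ A : Set (S → E), MeasurableSet A →
        Measurable fun p : H × (S → E) => π p.1 p.2 A) ∧
      (∀ ξ, IsProbabilityMeasure (w ξ)) ∧
      (∀ ξ, ∀ M : Set (Measure (S → E)), MeasurableSet M →
        w ξ M = μ ξ {ω | π ξ ω ∈ M}) ∧
      Measurable w ∧
      (∀ᵐ ξ ∂Q, ∃ N : Set (Measure (S → E)), MeasurableSet N ∧ w ξ N = 0 ∧
        (exGibbs (γ ξ))ᶜ ⊆ N) ∧
      (∀ᵐ ξ ∂Q, ∀ A : Set (S → E), MeasurableSet A →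
        μ ξ A = ∫⁻ ν, ν A ∂(w ξ)) := by
  cases isEmpty_or_nonempty H with
  | inl _ => exact ⟨isEmptyElim, isEmptyElim, isEmptyElim, fun A _ => measurable_of_empty _,
      isEmptyElim, isEmptyElim, measurable_of_empty _, .of_forall isEmptyElim,
      .of_forall isEmptyElim⟩
  | inr hH =>
  have : Nonempty (S → E) := (μ hH.some).nonempty_of_neZero
  let κ : Kernel H (S → E) := ⟨μ, hμmeas⟩
  have : IsMarkovKernel κ := ⟨hμprob⟩
  rw [← ae_toFinite] at hμGibbs ⊢
  let P := Q.toFinite ⊗ₘ κ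
  have measurable_section (ξ : H) : Measurable fun ω => tailKernel P (ξ, ω) :=
    (measurable_tailKernel P).comp measurable_prodMk_left
  refine ⟨fun ξ => (μ ξ).map fun ω => tailKernel P (ξ, ω), fun ξ ω => tailKernel P (ξ, ω),
    fun ξ ω => inferInstance,
    fun A hA => (Measure.measurable_coe hA).comp (measurable_tailKernel P),
    fun ξ => Measure.isProbabilityMeasure_map (measurable_section ξ).aemeasurable,
    fun ξ M hM => Measure.map_apply (measurable_section ξ) hM,
    measurable_map_prodMk κ (measurable_tailKernel P), ?_, ?_⟩
  · obtain ⟨𝒜, hcount, hpi, hgen⟩ := exists_countable_isPiSystem_generateFrom (S → E)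
    have ae_degenerate := (isJointlyGibbs_compProd hγ (κ := κ)
      hμGibbs).ae_tailKernel_mem_tailDegenerateGibbs hγ hcount hpi hgen
    filter_upwards [Measure.ae_ae_of_ae_compProd ae_degenerate] with ξ hξ
    have degenerate_meas : MeasurableSet (tailDegenerateGibbs 𝒜 (γ ξ)) :=
      (hγ.proper ξ).measurableSet_tailDegenerateGibbs hcount fun A hA =>
        hgen ▸ MeasurableSpace.measurableSet_generateFrom hA
    exact ⟨(tailDegenerateGibbs 𝒜 (γ ξ))ᶜ, degenerate_meas.compl,
      (ae_map_iff (measurable_section ξ).aemeasurable degenerate_meas).2 hξ,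
      Set.compl_subset_compl.2 ((hγ.proper ξ).tailDegenerateGibbs_subset_exGibbs hpi hgen)⟩
  · filter_upwards [ae_bind_tailKernel_eq Q.toFinite κ] with ξ hξ A hA
    calc μ ξ A = (μ ξ).bind (fun ω => tailKernel P (ξ, ω)) A := congrArg (· A) hξ.symm
      _ = ∫⁻ ω, tailKernel P (ξ, ω) A ∂μ ξ :=
          Measure.bind_apply hA (measurable_section ξ).aemeasurable
      _ = ∫⁻ ν, ν A ∂(μ ξ).map fun ω => tailKernel P (ξ, ω) :=
          (lintegral_map (Measure.measurable_coe hA) (measurable_section ξ)).symm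

/-- **Theorem 1 (extremal decomposition for random Gibbs measures).**
Given a random specification `γ` with `𝒢(γ[ξ]) ≠ ∅` for `ℙ`-a.e. `ξ` and a measurable
random Gibbs measure `ξ ↦ μ[ξ]`, there are a weight map `w : H → 𝒫(𝒫(Ω))` and a
kernel `π` such that `w[ξ]` is the image of `μ[ξ]` under `ω ↦ π[ξ](·|ω)`, the map
`ξ ↦ w[ξ]` is measurable, for a.e. `ξ` the measure `w[ξ]` is supported on
`ex 𝒢(γ[ξ])`, and `μ[ξ]` is the barycenter of `w[ξ]`. -/
theorem extremal_decomposition_of_random_Gibbs_measure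
    [Countable S] [MeasurableSpace E] [StandardBorelSpace E] [MeasurableSpace H]
    (ℙ : Measure H) [IsProbabilityMeasure ℙ]
    (γ : H → Finset S → (S → E) → Measure (S → E))
    (hγ : IsRandomSpecification γ)
    (hGnonempty : ∀ᵐ ξ ∂ℙ, (Gibbs (γ ξ)).Nonempty)
    (μ : H → Measure (S → E))
    (hμmeas : Measurable μ)
    (hμprob : ∀ ξ, IsProbabilityMeasure (μ ξ))
    (hμGibbs : ∀ᵐ ξ ∂ℙ, μ ξ ∈ Gibbs (γ ξ)) :
    ∃ (w : H → Measure (Measure (S → E))) (π : H → (S → E) → Measure (S → E)),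
      -- `π` is a probability kernel, jointly measurable in `(ξ, ω)`
      (∀ ξ ω, IsProbabilityMeasure (π ξ ω)) ∧
      (∀ A : Set (S → E), MeasurableSet A →
        Measurable fun p : H × (S → E) => π p.1 p.2 A) ∧
      -- (0) `w[ξ]` is the image of `μ[ξ]` under `ω ↦ π[ξ](·|ω)`
      (∀ ξ, IsProbabilityMeasure (w ξ)) ∧
      (∀ ξ, ∀ M : Set (Measure (S → E)), MeasurableSet M →
        w ξ M = μ ξ {ω | π ξ ω ∈ M}) ∧
      -- (1) `ξ ↦ w[ξ]` is `ℋ – e(𝒫(𝒫(Ω)))` measurable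
      Measurable w ∧
      -- (2) for a.e. `ξ`, `w[ξ]`-a.e. `ν` is an extreme Gibbs measure
      (∀ᵐ ξ ∂ℙ, ∃ N : Set (Measure (S → E)), MeasurableSet N ∧ w ξ N = 0 ∧
        (exGibbs (γ ξ))ᶜ ⊆ N) ∧
      -- (3) for a.e. `ξ`, `μ[ξ]` is the barycenter of `w[ξ]`
      (∀ᵐ ξ ∂ℙ, ∀ A : Set (S → E), MeasurableSet A →
        μ ξ A = ∫⁻ ν, ν A ∂(w ξ)) :=
  extremal_decomposition_of_random_Gibbs_measure_general ℙ γ hγ.isRandomProperKernelFamily μ hμmeas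
    hμprob hμGibbs

end GibbsMeta
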